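/- For all integers d ≥ 1, all σ > 0, and all ε with 0 < ε ≤ 1, the log-covering number satisfies ln N(ε, U_σ(B_2^d)) ≤ binom(2e(1+σ²)+d, d) · e^{−d} · (ln(4/ε))^{d+1} / (ln ln(4/ε))^{d}. -/

import Mathlib

/-! Write `L = log (4 / ε)` and `l = log L`. By Cauchy–Schwarz, the part of `f = ∑ₖ aₖ eₖ` of degree
greater than `n` is bounded at `x` by the square root of `∑_{|k| > n} eₖ(x)²`. Weighting the terms
by `z ^ |k|` with `z ≥ 1` and summing the resulting product of exponential series gives
`∑_{|k| > n} eₖ(x)² ≤ z ^ (-(n+1)) exp (2σ² z)` on the unit ball (`sum_pow_mul_ek_sq_le`). For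
`n = ⌊2(1+σ²) L / l⌋` and a suitable `z` the right-hand side is at most `exp (-2L) = (ε / 4)²`
(`tail_numeric`).

The part of degree at most `n` has sup norm at most `1`, since `∑ₖ eₖ(x)² ≤ 1`, and lies in a space of
dimension `M ≤ binom(n+d, d)`. A volume argument covers the unit ball of that space, in sup norm, by
`(1 + 2 / δ) ^ M` balls of radius `δ = 3ε/4` (`exists_finset_cover_ball`), and `1 + 2 / δ ≤ 4 / ε`.
Hence `log N ≤ M L`. Finally `n ≤ t s` with `t = 2e(1+σ²)` and `s = L / (e l) ≥ 1`, so that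
`binom(n+d, d) ≤ binom(t+d, d) s ^ d` (`gbinom_scale`). -/

open Real Filter MeasureTheory

/-- Generalized binomial coefficient `binom(t+d, d) = (1/d!) ∏_{i=1}^d (t+i)`. -/
noncomputable def gbinom (t : ℝ) (d : ℕ) : ℝ :=
  (∏ i ∈ Finset.range d, (t + (i : ℝ) + 1)) / (Nat.factorial d : ℝ)

/-- Covering number of a set of real-valued functions w.r.t. the sup distance,
by bounded functions. -/
noncomputable def covN {α : Type*} (ε : ℝ) (A : Set (α → ℝ)) : ℕ :=
  sInf {n : ℕ | ∃ g : Fin n → (α → ℝ),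
    (∀ i, ∃ C : ℝ, ∀ y, |g i y| ≤ C) ∧
    ∀ f ∈ A, ∃ i, ∀ y, |f y - g i y| ≤ ε}

/-- The functions `e_k^σ` forming an ONB of the Gaussian RKHS. -/
noncomputable def ek (d : ℕ) (σ : ℝ) (k : Fin d → ℕ) (x : EuclideanSpace ℝ (Fin d)) : ℝ :=
  Real.sqrt ((2 * σ ^ 2) ^ (∑ i, k i) / ∏ i, (Nat.factorial (k i) : ℝ)) *
    (∏ i, x i ^ k i) * Real.exp (-σ ^ 2 * ‖x‖ ^ 2)

/-- The image `U_σ(Y)` of the closed unit ball of the Gaussian RKHS on `Y`. -/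
noncomputable def UBall (d : ℕ) (σ : ℝ) (Y : Set (EuclideanSpace ℝ (Fin d))) :
    Set (Y → ℝ) :=
  {f | ∃ a : (Fin d → ℕ) → ℝ,
    Summable (fun k => a k ^ 2) ∧ (∑' k, a k ^ 2) ≤ 1 ∧
    (∀ x : Y, Summable (fun k => |a k * ek d σ k ↑x|)) ∧
    (∀ x : Y, f x = ∑' k, a k * ek d σ k ↑x)}

/-- The closed Euclidean unit ball of `ℝ^d`. -/
def B2 (d : ℕ) : Set (EuclideanSpace ℝ (Fin d)) := Metric.closedBall 0 1

/-! ### Covering the unit ball of a finite-dimensional normed space -/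

open Module in
/-- The balls of radius `δ / 2` around the points of a `δ`-separated subset of the unit ball are
disjoint and lie in the ball of radius `1 + δ / 2`; compare volumes. -/
theorem card_le_of_separated_ball {E : Type*} [NormedAddCommGroup E] [NormedSpace ℝ E]
    [FiniteDimensional ℝ E] {δ : ℝ} (hδ : 0 < δ) (s : Finset E) (hs : ∀ c ∈ s, ‖c‖ ≤ 1)
    (h : ∀ c ∈ s, ∀ b ∈ s, c ≠ b → δ ≤ ‖c - b‖) :
    (s.card : ℝ) ≤ (1 + 2 / δ) ^ finrank ℝ E := by
  borelize E
  let μ : Measure E := Measure.addHaar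
  have hr : 0 < δ / 2 := by positivity
  have hR : 0 < 1 + δ / 2 := by positivity
  have D : Set.Pairwise (s : Set E) (Function.onFun Disjoint fun c => Metric.ball c (δ / 2)) := by
    rintro c hc b hb hcb
    apply Metric.ball_disjoint_ball
    rw [dist_eq_norm]
    linarith [h c hc b hb hcb]
  have A_subset : (⋃ c ∈ s, Metric.ball c (δ / 2)) ⊆ Metric.ball (0 : E) (1 + δ / 2) := by
    refine Set.iUnion₂_subset fun x hx => Metric.ball_subset_ball' ?_
    rw [dist_zero_right]
    linarith [hs x hx]
  have I : (s.card : ENNReal) * ENNReal.ofReal ((δ / 2) ^ finrank ℝ E) * μ (Metric.ball 0 1) ≤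
      ENNReal.ofReal ((1 + δ / 2) ^ finrank ℝ E) * μ (Metric.ball 0 1) :=
    calc
      _ = μ (⋃ c ∈ s, Metric.ball c (δ / 2)) := by
        rw [measure_biUnion_finset D fun c _ => measurableSet_ball]
        simp only [μ.addHaar_ball_of_pos _ hr, Finset.sum_const, nsmul_eq_mul, mul_assoc]
      _ ≤ μ (Metric.ball (0 : E) (1 + δ / 2)) := measure_mono A_subset
      _ = _ := by simp only [μ.addHaar_ball_of_pos _ hR]
  have J := (ENNReal.mul_le_mul_iff_left (Metric.measure_ball_pos _ _ zero_lt_one).ne'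
    measure_ball_lt_top.ne).1 I
  have K := ENNReal.toReal_le_of_le_ofReal (by positivity) J
  rw [ENNReal.toReal_mul, ENNReal.toReal_natCast, ENNReal.toReal_ofReal (by positivity),
    ← le_div_iff₀ (by positivity), ← div_pow] at K
  have e : (1 + δ / 2) / (δ / 2) = 1 + 2 / δ := by
    field_simp
    ring
  rwa [e] at K

open Module in
/-- A `δ`-separated subset of the unit ball of maximal cardinality is a `δ`-net. -/
theorem exists_finset_cover_ball {E : Type*} [NormedAddCommGroup E] [NormedSpace ℝ E]
    [FiniteDimensional ℝ E] {δ : ℝ} (hδ : 0 < δ) :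
    ∃ s : Finset E, (s.card : ℝ) ≤ (1 + 2 / δ) ^ finrank ℝ E ∧
      ∀ x : E, ‖x‖ ≤ 1 → ∃ c ∈ s, ‖x - c‖ ≤ δ := by
  classical
  let P : ℕ → Prop := fun n => ∃ s : Finset E, s.card = n ∧ (∀ c ∈ s, ‖c‖ ≤ 1) ∧
    ∀ c ∈ s, ∀ b ∈ s, c ≠ b → δ ≤ ‖c - b‖
  obtain ⟨B, hB⟩ := exists_nat_ge ((1 + 2 / δ) ^ finrank ℝ E)
  have hbd : ∀ n, P n → n ≤ B := by
    rintro n ⟨s, rfl, h1, h2⟩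
    exact_mod_cast (card_le_of_separated_ball hδ s h1 h2).trans hB
  have h0 : P 0 := ⟨∅, by simp⟩
  obtain ⟨s, hcard, h1, h2⟩ := Nat.findGreatest_spec (Nat.zero_le B) h0
  refine ⟨s, card_le_of_separated_ball hδ s h1 h2, fun x hx => ?_⟩
  by_contra! hcon
  have hxs : x ∉ s := fun hxs => by simpa using hδ.trans (hcon x hxs)
  have hP : P (insert x s).card := by
    refine ⟨_, rfl, ?_, ?_⟩
    · simpa [hx] using h1
    · intro c hc b hb hcb
      rcases Finset.mem_insert.1 hc with rfl | hc'
      · exact (hcon b ((Finset.mem_insert.1 hb).resolve_left hcb.symm)).le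
      · rcases Finset.mem_insert.1 hb with rfl | hb'
        · rw [norm_sub_rev]
          exact (hcon c hc').le
        · exact h2 c hc' b hb' hcb
  have := Nat.le_findGreatest (hbd _ hP) hP
  rw [Finset.card_insert_of_notMem hxs] at this
  omega

/-! ### Multi-indices and the basis functions -/

/-- There are at most `binom(n+d, d)` multi-indices of degree at most `n`. -/
theorem exists_head_finset (d n : ℕ) : ∃ K : Finset (Fin d → ℕ), K.card ≤ (n + d).choose d ∧
    ∀ k : Fin d → ℕ, ∑ i, k i ≤ n → k ∈ K := by
  classical
  -- A slack coordinate `n - ∑ i, k i` turns `∑ i, k i ≤ n` into a sum over `Fin (d + 1)` equal to `n`.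
  refine ⟨(Finset.finsuppAntidiag (Finset.univ : Finset (Fin (d + 1))) n).image
    (fun f i => f i.succ), Finset.card_image_le.trans ?_, fun k hk => ?_⟩
  · rw [Finset.card_finsuppAntidiag_nat_eq_choose]
    apply le_of_eq
    simp only [Finset.card_univ, Fintype.card_fin]
    rw [show d + 1 + n - 1 = n + d by omega]
    exact (Nat.choose_symm_add (a := n) (b := d))
  · refine Finset.mem_image.2 ⟨Finsupp.equivFunOnFinite.symm (Fin.cons (n - ∑ i, k i) k), ?_, ?_⟩
    · simp [Finset.mem_finsuppAntidiag, Fin.sum_univ_succ]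
      omega
    · ext i; simp

/-- The full series `∑ₖ z ^ |k| eₖ(x)²` is a product of `d` exponential series with sum
`exp (2σ²(z-1)‖x‖²)`. For `z = 1` this bounds the finite sums of `eₖ(x)²` by `1`; for `z > 1` it
is an exponential-moment bound on the terms of high degree. -/
theorem sum_pow_mul_ek_sq_le (d : ℕ) (σ z : ℝ) (hz : 0 ≤ z) (x : EuclideanSpace ℝ (Fin d))
    (S : Finset (Fin d → ℕ)) :
    ∑ k ∈ S, z ^ (∑ i, k i) * ek d σ k x ^ 2 ≤ Real.exp (2 * σ ^ 2 * (z - 1) * ‖x‖ ^ 2) := by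
  classical
  let u : Fin d → ℝ := fun i => 2 * σ ^ 2 * z * x i ^ 2
  have hu : ∀ i, 0 ≤ u i := fun i => by positivity
  have hterm : ∀ k : Fin d → ℕ, z ^ (∑ i, k i) * ek d σ k x ^ 2 =
      Real.exp (-(2 * σ ^ 2) * ‖x‖ ^ 2) * ∏ i, (u i ^ k i / (k i).factorial) := by
    intro k
    have e1 : Real.exp (-σ ^ 2 * ‖x‖ ^ 2) ^ 2 = Real.exp (-(2 * σ ^ 2) * ‖x‖ ^ 2) := by
      rw [← Real.exp_nat_mul]; congr 1; push_cast; ring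
    have e2 : ∏ i, (u i ^ k i / ((k i).factorial : ℝ)) =
        z ^ (∑ i, k i) * ((2 * σ ^ 2) ^ (∑ i, k i) / ∏ i, ((k i).factorial : ℝ)) *
          (∏ i, x i ^ k i) ^ 2 := by
      simp only [u, mul_pow, Finset.prod_div_distrib, Finset.prod_mul_distrib,
        Finset.prod_pow_eq_pow_sum, ← Finset.prod_pow]
      have : ∀ i, (x i ^ 2) ^ k i = (x i ^ k i) ^ 2 := fun i => by ring
      simp only [this]
      ring
    rw [ek, mul_pow, mul_pow, Real.sq_sqrt (by positivity), e1, e2]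
    ring
  obtain ⟨N, hN⟩ : ∃ N : ℕ, S ⊆ Fintype.piFinset fun _ => Finset.range N := by
    refine ⟨(S.sup fun k => ∑ i, k i) + 1, fun k hk => ?_⟩
    rw [Fintype.mem_piFinset]
    intro i
    have h1 : ∑ i, k i ≤ S.sup fun k => ∑ i, k i := Finset.le_sup (f := fun k => ∑ i, k i) hk
    have h2 : k i ≤ ∑ i, k i := Finset.single_le_sum (fun _ _ => Nat.zero_le _) (Finset.mem_univ i)
    exact Finset.mem_range.2 (by omega)
  calc _ ≤ ∑ k ∈ Fintype.piFinset fun _ => Finset.range N, z ^ (∑ i, k i) * ek d σ k x ^ 2 :=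
        Finset.sum_le_sum_of_subset_of_nonneg hN fun _ _ _ => by positivity
    _ = Real.exp (-(2 * σ ^ 2) * ‖x‖ ^ 2) *
          ∏ i, ∑ j ∈ Finset.range N, u i ^ j / (j.factorial : ℝ) := by
        simp only [hterm]
        rw [← Finset.mul_sum, Finset.prod_univ_sum]
    _ ≤ Real.exp (-(2 * σ ^ 2) * ‖x‖ ^ 2) * ∏ i, Real.exp (u i) := by
        gcongr with i
        exact Real.sum_le_exp_of_nonneg (hu i) N
    _ = _ := by
        rw [← Real.exp_sum, ← Real.exp_add, EuclideanSpace.real_norm_sq_eq, ← Finset.mul_sum]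
        congr 1; ring

/-- Cauchy–Schwarz for a finite partial sum of an element of the unit ball of the RKHS. -/
theorem abs_sum_mul_ek_le (d : ℕ) (σ : ℝ) (a : (Fin d → ℕ) → ℝ)
    (ha : Summable fun k => a k ^ 2) (ha1 : ∑' k, a k ^ 2 ≤ 1) {B : ℝ} (hB : 0 ≤ B)
    (x : EuclideanSpace ℝ (Fin d)) (S : Finset (Fin d → ℕ))
    (hS : ∑ k ∈ S, ek d σ k x ^ 2 ≤ B ^ 2) : |∑ k ∈ S, a k * ek d σ k x| ≤ B := by
  apply abs_le_of_sq_le_sq _ hB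
  have h1 : ∑ k ∈ S, a k ^ 2 ≤ 1 := (ha.sum_le_tsum S fun _ _ => sq_nonneg _).trans ha1
  calc _ ≤ (∑ k ∈ S, a k ^ 2) * ∑ k ∈ S, ek d σ k x ^ 2 := Finset.sum_mul_sq_le_sq_mul_sq _ _ _
    _ ≤ 1 * B ^ 2 := by gcongr
    _ = B ^ 2 := one_mul _

/-! ### Numerical estimates -/

/-- Compare `∏ (n + i)` with `∏ (t + i)` factor by factor: `n + i ≤ s (t + i)` as `s ≥ 1`. -/
theorem gbinom_scale (d n : ℕ) (t s : ℝ) (hs : 1 ≤ s) (hn : (n : ℝ) ≤ t * s) :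
    ((n + d).choose d : ℝ) ≤ gbinom t d * s ^ d := by
  have h : ((n + d).choose d : ℝ) =
      (∏ i ∈ Finset.range d, ((n : ℝ) + i + 1)) / (Nat.factorial d : ℝ) := by
    rw [eq_div_iff (by positivity), mul_comm]
    have := Nat.ascFactorial_eq_factorial_mul_choose n d
    rw [Nat.ascFactorial_eq_prod_range] at this
    rw [← Nat.cast_mul, ← this]
    push_cast
    exact Finset.prod_congr rfl fun i _ => by ring
  rw [h, gbinom, div_mul_eq_mul_div]
  gcongr
  nth_rewrite 3 [← Finset.card_range d]
  rw [← Finset.prod_const, ← Finset.prod_mul_distrib]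
  apply Finset.prod_le_prod
  · intro i _; positivity
  · intro i _
    have : (0 : ℝ) ≤ i := by positivity
    nlinarith

/-- Choice of the truncation degree. With `L = exp l`, the weight `z = T / lam`, where
`T = (2 + lam) L / l`, is the Chernoff-optimal one for degree `T`, and makes the squared tail
`z⁻ⁿ exp (lam z)` at most `exp (-2L)` as soon as `n ≥ T`. -/
theorem tail_numeric (l lam : ℝ) (hl : 0 < l) (hlam : 0 < lam) :
    ∃ z : ℝ, 1 ≤ z ∧ ∀ n : ℕ, (2 + lam) * Real.exp l / l ≤ n →
      Real.exp (lam * z) ≤ z ^ n * Real.exp (-2 * Real.exp l) := by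
  set L := Real.exp l with hL
  set T := (2 + lam) * L / l with hT
  have hLl : l ≤ L := by linarith [Real.add_one_le_exp l]
  have hLpos : 0 < L := Real.exp_pos l
  have hz : 1 ≤ T / lam := by
    rw [hT, div_div, one_le_div (by positivity)]
    nlinarith
  refine ⟨T / lam, hz, fun n hn => ?_⟩
  have hzp : 0 < T / lam := by linarith
  have hlog : 2 * l / (2 + lam) ≤ Real.log (T / lam) - 1 := by
    have e : T / lam = L / (lam * l / (2 + lam)) := by rw [hT]; field_simp
    -- `1 + log y ≤ y` for `y = lam * l / (2 + lam)` absorbs the iterated logarithm `log l`.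
    have h1 := Real.log_le_sub_one_of_pos (x := lam * l / (2 + lam)) (by positivity)
    rw [e, Real.log_div (by positivity) (by positivity), hL, Real.log_exp]
    have : 2 * l / (2 + lam) = l - lam * l / (2 + lam) := by field_simp; ring
    linarith
  have hlog0 : 0 ≤ Real.log (T / lam) := Real.log_nonneg hz
  rw [← Real.exp_log hzp, ← Real.exp_nat_mul, ← Real.exp_add, Real.exp_log hzp]
  apply Real.exp_le_exp.2
  have h2 : T * (2 * l / (2 + lam)) = 2 * L := by rw [hT]; field_simp
  have h3 : lam * (T / lam) = T := by field_simp
  have hTp : 0 ≤ T := by positivity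
  nlinarith [mul_le_mul_of_nonneg_left hlog hTp, mul_le_mul_of_nonneg_right hn hlog0]

/-! ### The covering number bound -/

/-- Truncate at degree `n`: `hn` makes the tail at most `η` in sup norm, and the head lies in the
unit ball of a space of dimension at most `binom(n+d, d)`, which has a `δ`-net. -/
theorem covN_UBall_le (d : ℕ) (σ ε η δ z : ℝ) (hη : 0 ≤ η) (hδ : 0 < δ) (hε : η + δ ≤ ε)
    (hz : 1 ≤ z) (n : ℕ) (hn : Real.exp (2 * σ ^ 2 * z) ≤ z ^ (n + 1) * η ^ 2) :
    (covN ε (UBall d σ (B2 d)) : ℝ) ≤ (1 + 2 / δ) ^ ((n + d).choose d) := by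
  classical
  obtain ⟨K, hKcard, hK⟩ := exists_head_finset d n
  have : CompactSpace (B2 d) := isCompact_iff_compactSpace.1 (isCompact_closedBall _ _)
  have hx1 : ∀ x : B2 d, ‖(x : EuclideanSpace ℝ (Fin d))‖ ≤ 1 := fun x => by
    simpa [B2] using x.2
  let e : (Fin d → ℕ) → C(B2 d, ℝ) := fun k =>
    ⟨fun x => ek d σ k x, by unfold ek; fun_prop⟩
  let V : Submodule ℝ C(B2 d, ℝ) := Submodule.span ℝ (K.image e : Finset C(B2 d, ℝ))
  have hVK : Module.finrank ℝ V ≤ (n + d).choose d :=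
    (finrank_span_finset_le_card _).trans (Finset.card_image_le.trans hKcard)
  have : FiniteDimensional ℝ V := FiniteDimensional.span_finset ℝ _
  obtain ⟨s, hs, hcov⟩ := exists_finset_cover_ball (E := V) hδ
  have hcovN : covN ε (UBall d σ (B2 d)) ≤ s.card := by
    apply Nat.sInf_le
    refine ⟨fun i => ((s.equivFin.symm i : V) : C(B2 d, ℝ)), fun i => ?_, ?_⟩
    · exact ⟨_, fun y => by
        simpa only [Real.norm_eq_abs] using
          ContinuousMap.norm_coe_le_norm ((s.equivFin.symm i : V) : C(B2 d, ℝ)) y⟩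
    · rintro f ⟨a, ha, ha1, hsum, hf⟩
      -- `h` is the truncation of `f` to the degrees at most `n`.
      let h : V := ⟨∑ k ∈ K, a k • e k, Submodule.sum_mem _ fun k hk =>
        Submodule.smul_mem _ _ (Submodule.subset_span (by simpa using ⟨k, hk, rfl⟩))⟩
      have hval : ∀ x, (h : C(B2 d, ℝ)) x = ∑ k ∈ K, a k * ek d σ k x := fun x => by
        simp [h, e]
      have hh : ‖h‖ ≤ 1 := by
        refine (ContinuousMap.norm_le _ zero_le_one).2 fun x => ?_
        change |(h : C(B2 d, ℝ)) x| ≤ 1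
        rw [hval]
        refine abs_sum_mul_ek_le d σ a ha ha1 zero_le_one x K ?_
        simpa using sum_pow_mul_ek_sq_le d σ 1 zero_le_one x K
      obtain ⟨c, hc, hhc⟩ := hcov h hh
      refine ⟨s.equivFin ⟨c, hc⟩, fun x => ?_⟩
      have hhead : |(h : C(B2 d, ℝ)) x - (c : C(B2 d, ℝ)) x| ≤ δ :=
        (ContinuousMap.norm_coe_le_norm ((h - c : V) : C(B2 d, ℝ)) x).trans hhc
      have htail : |f x - (h : C(B2 d, ℝ)) x| ≤ η := by
        have hlim : Tendsto (fun S : Finset (Fin d → ℕ) =>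
            |∑ k ∈ S, a k * ek d σ k x - (h : C(B2 d, ℝ)) x|) atTop
            (nhds |f x - (h : C(B2 d, ℝ)) x|) := by
          rw [hf x]
          exact ((hsum x).of_abs.hasSum.sub_const _).abs
        refine le_of_tendsto hlim ?_
        filter_upwards [eventually_ge_atTop K] with S hS
        rw [hval, ← Finset.sum_sdiff hS, add_sub_cancel_right]
        refine abs_sum_mul_ek_le d σ a ha ha1 hη x _ ?_
        have hzpos : 0 < z ^ (n + 1) := by positivity
        refine le_of_mul_le_mul_left ?_ hzpos
        calc z ^ (n + 1) * ∑ k ∈ S \ K, ek d σ k x ^ 2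
            ≤ ∑ k ∈ S \ K, z ^ (∑ i, k i) * ek d σ k x ^ 2 := by
              rw [Finset.mul_sum]
              refine Finset.sum_le_sum fun k hk => ?_
              have : n + 1 ≤ ∑ i, k i := by
                by_contra hcon
                exact (Finset.mem_sdiff.1 hk).2 (hK k (by omega))
              gcongr
          _ ≤ Real.exp (2 * σ ^ 2 * (z - 1) * ‖(x : EuclideanSpace ℝ (Fin d))‖ ^ 2) :=
              sum_pow_mul_ek_sq_le d σ z (by linarith) x _
          _ ≤ Real.exp (2 * σ ^ 2 * z) := by
              apply Real.exp_le_exp.2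
              have h1 : ‖(x : EuclideanSpace ℝ (Fin d))‖ ^ 2 ≤ 1 :=
                pow_le_one₀ (norm_nonneg _) (hx1 x)
              have h2 : 0 ≤ 2 * σ ^ 2 * (z - 1) :=
                mul_nonneg (by positivity) (by linarith)
              nlinarith [sq_nonneg σ]
          _ ≤ _ := hn
      simp only [Equiv.symm_apply_apply]
      exact (abs_sub_le _ _ _).trans (by linarith)
  calc (covN ε (UBall d σ (B2 d)) : ℝ) ≤ s.card := by exact_mod_cast hcovN
    _ ≤ (1 + 2 / δ) ^ Module.finrank ℝ V := hs
    _ ≤ _ := pow_le_pow_right₀ (by linarith [div_pos two_pos hδ]) hVK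

theorem log_covN_UBall_le (d : ℕ) (hd : 1 ≤ d) (σ : ℝ) (hσ : 0 < σ)
    (ε : ℝ) (hε : 0 < ε) (hε1 : ε ≤ 1) :
    Real.log (covN ε (UBall d σ (B2 d))) ≤
      gbinom (2 * Real.exp 1 * (1 + σ ^ 2)) d * Real.exp (-(d : ℝ)) *
        (Real.log (4 / ε)) ^ (d + 1) / (Real.log (Real.log (4 / ε))) ^ d := by
  have h4 : 4 ≤ 4 / ε := by rw [le_div_iff₀ hε]; linarith
  have hL1 : 1 < Real.log (4 / ε) := by
    rw [Real.lt_log_iff_exp_lt (by positivity)]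
    linarith [Real.exp_one_lt_d9]
  obtain ⟨L, hL⟩ : ∃ L, L = Real.log (4 / ε) := ⟨_, rfl⟩
  obtain ⟨l, hl⟩ : ∃ l, l = Real.log L := ⟨_, rfl⟩
  rw [← hL, ← hl]
  rw [← hL] at hL1
  have hlpos : 0 < l := hl ▸ Real.log_pos hL1
  have hexpl : Real.exp l = L := by rw [hl, Real.exp_log (by linarith)]
  obtain ⟨z, hz, hzn⟩ := tail_numeric l (2 * σ ^ 2) hlpos (by positivity)
  rw [hexpl] at hzn
  obtain ⟨n, hn⟩ : ∃ n, n = ⌊(2 + 2 * σ ^ 2) * L / l⌋₊ := ⟨_, rfl⟩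
  have hnle : (n : ℝ) ≤ (2 + 2 * σ ^ 2) * L / l := hn ▸ Nat.floor_le (by positivity)
  have hnlt : (2 + 2 * σ ^ 2) * L / l ≤ (n + 1 : ℕ) := by
    push_cast
    exact hn ▸ (Nat.lt_floor_add_one _).le
  have hexpL : Real.exp (-2 * L) = (ε / 4) ^ 2 := by
    rw [show -2 * L = -L + -L by ring, Real.exp_add, Real.exp_neg, hL,
      Real.exp_log (by positivity), inv_div, sq]
  -- A tail of size `ε / 4` leaves `δ = 3ε / 4` for the head, and then `1 + 2 / δ ≤ 4 / ε`.
  have hcov := covN_UBall_le d σ ε (ε / 4) (3 * ε / 4) z (by positivity) (by positivity)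
    (by linarith) hz n (by rw [← hexpL]; exact hzn _ hnlt)
  have hbase : 1 + 2 / (3 * ε / 4) ≤ 4 / ε := by
    rw [show 1 + 2 / (3 * ε / 4) = (ε + 8 / 3) / ε by field_simp; ring]
    gcongr
    linarith
  have hlog : Real.log (covN ε (UBall d σ (B2 d))) ≤ ((n + d).choose d : ℝ) * L := by
    rw [hL, ← Real.log_pow]
    -- `Real.log 0 = 0`, so a vanishing covering number needs no separate bound.
    rcases (Nat.cast_nonneg (α := ℝ) (covN ε (UBall d σ (B2 d)))).eq_or_lt with h0 | h0
    · rw [← h0, Real.log_zero]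
      exact Real.log_nonneg (one_le_pow₀ (by linarith))
    · exact Real.log_le_log h0 (hcov.trans (by gcongr))
  -- `log L ≤ L / e`
  have hs : 1 ≤ L / (Real.exp 1 * l) := by
    have := Real.add_one_le_exp (l - 1)
    rw [one_le_div (by positivity), ← hexpl, show l = 1 + (l - 1) by ring, Real.exp_add]
    gcongr
    linarith
  have hM := gbinom_scale d n (2 * Real.exp 1 * (1 + σ ^ 2)) (L / (Real.exp 1 * l))
    hs (hnle.trans (le_of_eq (by field_simp)))
  calc _ ≤ ((n + d).choose d : ℝ) * L := hlog
    _ ≤ gbinom (2 * Real.exp 1 * (1 + σ ^ 2)) d * (L / (Real.exp 1 * l)) ^ d * L := by gcongr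
    _ = _ := by
      rw [Real.exp_neg, show Real.exp (d : ℝ) = Real.exp 1 ^ d by
        rw [← Real.exp_nat_mul, mul_one], div_pow, mul_pow]
      field_simp
      ring
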